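/- Let 0 < b < a be real numbers, let h > 0 be determined by sinh(h/2) = √(a² − b²)/b, let μ̂₁(s) = a/b³ − ab/(a² sech² s + b² tanh² s)², and define L̂₁ : ℝ → ℝ by L̂₁(s) = 2b·Σ_{j∈ℤ} μ̂₁(s + jh). Then L̂₁ is smooth, its set of real critical points is exactly (h/2)·ℤ = {j·h/2 : j ∈ ℤ} (i.e. L̂₁'(s) = 0 if and only if 2s/h ∈ ℤ), and every critical point is nondegenerate: L̂₁''(s) ≠ 0 whenever 2s/h ∈ ℤ. -/

import Mathlib

/-!
Write `Sₙ(x) = ∑ⱼ sech (x + j h) ^ n`. Multiplying two such series and summing along the diagonals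
`k - j = m`, where the addition formulas make the products telescope or reduce to shifts of `S₁`,
gives `S₁² = S₂ + const` and `S₁'' = S₁ (κ - 2 S₂)`, the classical relations for the elliptic
function `dn`. Let `Φ` be the odd primitive of `S₁`, which is increasing with `Φ(n h / 2) = n π / 2`
for `n ∈ ℤ`. The vector `(2 S₂ - κ, 2 S₁')` rotates with angular velocity `-2 S₁`, so
`S₂ = κ / 2 + A cos 2Φ`.

The coefficient `A` does not vanish. Otherwise `S₁` is constant, and the recursion
`Sₙ'' = n² Sₙ - n (n + 1) Sₙ₊₂` makes every `Sₙ` with `n` odd constant; but `Sₙ(0) ≥ 1`, while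
`Sₙ(h / 2) → 0` as `n → ∞`. Hence `S₂' = -2 A S₁ sin 2Φ` vanishes exactly on `(h / 2) ℤ`, with
simple zeros. Finally, a partial fraction decomposition turns the Melnikov potential into an affine
function of `S₂(s + h / 2)`.
-/

open Real Filter Topology Asymptotics

section General

theorem hasSum_int_telescope {M : Type*} [AddCommGroup M] [TopologicalSpace M]
    [IsTopologicalAddGroup M] [T2Space M] {f : ℤ → M} {a b : M}
    (hs : Summable fun j => f (j + 1) - f j) (htop : Tendsto f atTop (𝓝 b))
    (hbot : Tendsto f atBot (𝓝 a)) : HasSum (fun j => f (j + 1) - f j) (b - a) := by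
  have hpartial (N : ℕ) :
      ∑ j ∈ Finset.Ico (-N : ℤ) N, (f (j + 1) - f j) = f N - f (-N) := by
    rw [← neg_inj, ← Finset.sum_neg_distrib, neg_sub, ← Finset.sum_Ico_int_sub]
    simp only [neg_sub]
  have hlim : Tendsto (fun N : ℕ => f N - f (-N)) atTop (𝓝 (b - a)) :=
    (htop.comp tendsto_natCast_atTop_atTop).sub
      (hbot.comp (tendsto_neg_atTop_atBot.comp tendsto_natCast_atTop_atTop))
  have hsum := hs.hasSum.comp
    ((Finset.tendsto_Ico_neg_atTop_atTop (α := ℤ)).comp tendsto_natCast_atTop_atTop)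
  have heq := tendsto_nhds_unique (hsum.congr hpartial) hlim
  exact heq ▸ hs.hasSum

theorem hasSum_int_telescope_add {M : Type*} [AddCommGroup M] [TopologicalSpace M]
    [IsTopologicalAddGroup M] {f : ℤ → M} {c : M}
    (hf : HasSum (fun j => f (j + 1) - f j) c) (m : ℤ) :
    HasSum (fun j => f (j + m) - f j) (m • c) := by
  induction m using Int.induction_on with
  | zero => simp
  | succ i ih =>
    have hstep := ((Equiv.addRight (i : ℤ)).hasSum_iff.2 hf).add ih
    simpa [Function.comp_def, add_assoc, add_zsmul, add_comm] using hstep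
  | pred i ih =>
    have hstep := ih.sub ((Equiv.addRight (-(i : ℤ) - 1)).hasSum_iff.2 hf)
    rw [sub_zsmul, one_zsmul, ← sub_eq_add_neg]
    refine hstep.congr_fun fun j => ?_
    rw [Function.comp_apply, Equiv.coe_addRight, show j + (-i - 1) + 1 = j + -(i : ℤ) by ring]
    abel

theorem hasSum_tsum_mul_add {ι R : Type*} [AddGroup ι] [NormedRing R] [CompleteSpace R]
    {p q : ι → R} (hp : Summable fun j => ‖p j‖) (hq : Summable fun j => ‖q j‖) :
    HasSum (fun m => ∑' j, p j * q (j + m)) ((∑' j, p j) * ∑' j, q j) := by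
  let e : ι × ι ≃ ι × ι :=
    (Equiv.prodComm ι ι).trans (Equiv.prodShear (Equiv.refl ι) Equiv.addLeft)
  have hpq := summable_mul_of_summable_norm hp hq
  have he : HasSum (fun z : ι × ι => p z.2 * q (z.2 + z.1)) ((∑' j, p j) * ∑' j, q j) :=
    e.hasSum_iff.2 (hp.of_norm.hasSum.mul hq.of_norm.hasSum hpq)
  exact he.prod_fiberwise fun m => (he.summable.prod_factor m).hasSum

theorem contDiff_of_hasDerivAt_comp {E : Type*} [NormedAddCommGroup E] [NormedSpace ℝ E]
    [CompleteSpace E] {n : ℕ∞} {F : E → E} {y : ℝ → E} (hF : ContDiff ℝ n F)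
    (hy : ∀ t, HasDerivAt y (F (y t)) t) : ContDiff ℝ n y := by
  refine contDiff_iff_contDiffAt.2 fun t => ?_
  have hIcc : ContDiffOn ℝ n y (Set.Icc (t - 1) (t + 1)) :=
    ODE.contDiffOn_enat_Icc_of_hasDerivWithinAt (f := fun _ => F) (u := Set.univ)
      (hF.comp contDiff_snd).contDiffOn (fun s _ => (hy s).hasDerivWithinAt) (Set.mapsTo_univ _ _)
  exact hIcc.contDiffAt (Icc_mem_nhds (by linarith) (by linarith))

theorem eq_rotation_of_hasDerivAt {X Y θ ω : ℝ → ℝ}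
    (hX : ∀ x, HasDerivAt X (ω x * Y x) x) (hY : ∀ x, HasDerivAt Y (-(ω x * X x)) x)
    (hθ : ∀ x, HasDerivAt θ (ω x) x) (hθ0 : θ 0 = 0) (x : ℝ) :
    X x = X 0 * cos (θ x) + Y 0 * sin (θ x) ∧ Y x = Y 0 * cos (θ x) - X 0 * sin (θ x) := by
  have hU : X x * cos (θ x) - Y x * sin (θ x) = X 0 := by
    have hd (t : ℝ) := ((hX t).mul (hθ t).cos).sub ((hY t).mul (hθ t).sin)
    have := is_const_of_deriv_eq_zero (fun t => (hd t).differentiableAt)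
      (fun t => (hd t).deriv.trans (by ring)) x 0
    simpa [hθ0] using this
  have hV : X x * sin (θ x) + Y x * cos (θ x) = Y 0 := by
    have hd (t : ℝ) := ((hX t).mul (hθ t).sin).add ((hY t).mul (hθ t).cos)
    have := is_const_of_deriv_eq_zero (fun t => (hd t).differentiableAt)
      (fun t => (hd t).deriv.trans (by ring)) x 0
    simpa [hθ0] using this
  have hsc := sin_sq_add_cos_sq (θ x)
  constructor
  · linear_combination cos (θ x) * hU + sin (θ x) * hV - X x * hsc
  · linear_combination cos (θ x) * hV - sin (θ x) * hU - Y x * hsc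

end General

/-- The hyperbolic secant. -/
noncomputable def sech (x : ℝ) : ℝ := (cosh x)⁻¹

/-- The Gudermannian function, the odd primitive of `sech`. -/
noncomputable def gudermannian (x : ℝ) : ℝ := arctan (sinh x)

section Sech

variable (x y : ℝ)

theorem sech_pos : 0 < sech x := inv_pos.2 (cosh_pos x)

theorem sech_zero : sech 0 = 1 := by simp [sech]

theorem sech_neg : sech (-x) = sech x := by rw [sech, sech, cosh_neg]

theorem sech_le_sech_iff {x y : ℝ} : sech x ≤ sech y ↔ |y| ≤ |x| := by
  rw [sech, sech, inv_le_inv₀ (cosh_pos x) (cosh_pos y), cosh_le_cosh]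

theorem sech_le_one : sech x ≤ 1 := inv_le_one_of_one_le₀ (one_le_cosh x)

theorem sech_lt_one {x : ℝ} (hx : x ≠ 0) : sech x < 1 := inv_lt_one_of_one_lt₀ (one_lt_cosh.2 hx)

theorem sech_le_two_mul_exp_neg_abs : sech x ≤ 2 * exp (-|x|) := by
  have hcosh : exp |x| / 2 ≤ cosh x := by
    rw [← cosh_abs x, cosh_eq]
    linarith [exp_pos (-|x|)]
  calc sech x ≤ (exp |x| / 2)⁻¹ := inv_anti₀ (by positivity) hcosh
    _ = 2 * exp (-|x|) := by rw [inv_div, exp_neg, div_eq_mul_inv]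

theorem sech_add_le_exp_abs_mul_sech : sech (x + y) ≤ exp |x| * sech y := by
  rw [sech, sech, ← div_eq_mul_inv, inv_le_iff_one_le_mul₀ (cosh_pos _), div_mul_eq_mul_div,
    one_le_div (cosh_pos y), cosh_eq, cosh_eq, mul_div_assoc', div_le_div_iff_of_pos_right two_pos,
    mul_add, ← exp_add, ← exp_add]
  gcongr <;> linarith [neg_abs_le x, le_abs_self x]

theorem tanh_sq_add_sech_sq : tanh x ^ 2 + sech x ^ 2 = 1 := by
  rw [tanh_eq_sinh_div_cosh, sech]
  have := (cosh_pos x).ne'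
  field_simp
  rw [cosh_sq]

theorem hasDerivAt_sech : HasDerivAt sech (-(sech x * tanh x)) x := by
  refine ((hasDerivAt_cosh x).inv (cosh_pos x).ne').congr_deriv ?_
  rw [tanh_eq_sinh_div_cosh, sech]
  field_simp

theorem hasDerivAt_tanh : HasDerivAt tanh (sech x ^ 2) x := by
  rw [funext tanh_eq_sinh_div_cosh]
  refine ((hasDerivAt_sinh x).div (hasDerivAt_cosh x) (cosh_pos x).ne').congr_deriv ?_
  rw [sech, inv_pow, ← one_div]
  congr 1
  linear_combination cosh_sq x

theorem hasDerivAt_sech_pow (n : ℕ) :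
    HasDerivAt (fun y => sech y ^ n) (-(n * (sech x ^ n * tanh x))) x := by
  rcases n with _ | n
  · simpa using hasDerivAt_const x (1 : ℝ)
  · refine ((hasDerivAt_sech x).pow (n + 1)).congr_deriv ?_
    rw [Nat.add_sub_cancel]
    ring

theorem hasDerivAt_sech_pow_mul_tanh (n : ℕ) :
    HasDerivAt (fun y => -(n * (sech y ^ n * tanh y)))
      (n ^ 2 * sech x ^ n - n * (n + 1) * sech x ^ (n + 2)) x := by
  refine (((hasDerivAt_sech_pow x n).mul (hasDerivAt_tanh x)).const_mul (n : ℝ)).neg.congr_deriv ?_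
  linear_combination (n ^ 2 * sech x ^ n) * tanh_sq_add_sech_sq x

theorem hasDerivAt_gudermannian : HasDerivAt gudermannian (sech x) x := by
  refine ((hasDerivAt_arctan _).comp x (hasDerivAt_sinh x)).congr_deriv ?_
  rw [← cosh_sq', sech]
  field_simp

theorem gudermannian_neg : gudermannian (-x) = -gudermannian x := by simp [gudermannian]

theorem sin_gudermannian : sin (gudermannian x) = tanh x := by
  rw [gudermannian, sin_arctan, ← cosh_sq', sqrt_sq (cosh_pos x).le, tanh_eq_sinh_div_cosh]

theorem tendsto_gudermannian_atTop : Tendsto gudermannian atTop (𝓝 (π / 2)) :=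
  tendsto_nhds_of_tendsto_nhdsWithin tendsto_arctan_atTop |>.comp sinhOrderIso.tendsto_atTop

theorem tendsto_gudermannian_atBot : Tendsto gudermannian atBot (𝓝 (-(π / 2))) :=
  tendsto_nhds_of_tendsto_nhdsWithin tendsto_arctan_atBot |>.comp sinhOrderIso.tendsto_atBot

theorem tendsto_tanh_atTop : Tendsto tanh atTop (𝓝 1) := by
  simpa [Function.comp_def, sin_gudermannian] using
    (continuous_sin.tendsto _).comp tendsto_gudermannian_atTop

theorem tendsto_tanh_atBot : Tendsto tanh atBot (𝓝 (-1)) := by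
  simpa [Function.comp_def, sin_gudermannian] using
    (continuous_sin.tendsto _).comp tendsto_gudermannian_atBot

theorem sinh_mul_sech_mul_sech_add :
    sinh y * (sech x * sech (x + y)) = tanh (x + y) - tanh x := by
  have hx := (cosh_pos x).ne'
  have hxy := (cosh_pos (x + y)).ne'
  rw [tanh_eq_sinh_div_cosh, tanh_eq_sinh_div_cosh, sech, sech]
  field_simp
  rw [sinh_add, cosh_add]
  linear_combination -sinh y * cosh_sq x

theorem sinh_sq_mul_sech_mul_sech_add_sq :
    sinh y ^ 2 * (sech x * sech (x + y)) ^ 2 =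
      2 * cosh y * (sech x * sech (x + y)) - (sech x ^ 2 + sech (x + y) ^ 2) := by
  have hx := (cosh_pos x).ne'
  have hxy := (cosh_pos (x + y)).ne'
  rw [sech, sech]
  field_simp
  rw [cosh_add]
  linear_combination (-sinh y ^ 2) * cosh_sq x - cosh x ^ 2 * cosh_sq y

theorem sinh_sq_mul_sech_sq_mul_sech_add_add_sech_sub :
    sinh y ^ 2 * (sech x ^ 2 * (sech (x + y) + sech (x - y))) =
      2 * cosh y * sech x - (sech (x + y) + sech (x - y)) := by
  have hx := (cosh_pos x).ne'
  have hadd := (cosh_pos (x + y)).ne'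
  have hsub := (cosh_pos (x - y)).ne'
  have hprod : cosh (x + y) * cosh (x - y) = cosh x ^ 2 + sinh y ^ 2 := by
    rw [cosh_add, cosh_sub]
    linear_combination cosh x ^ 2 * cosh_sq y + sinh y ^ 2 * cosh_sq x
  have hsum : cosh (x + y) + cosh (x - y) = 2 * cosh x * cosh y := by
    rw [cosh_add, cosh_sub]
    ring
  simp only [sech]
  field_simp
  linear_combination (cosh x ^ 2 + sinh y ^ 2) * hsum - 2 * cosh x * cosh y * hprod

end Sech

section Periodization

variable {E : Type*} [NormedAddCommGroup E] {φ : ℝ → E} {h : ℝ}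

theorem summable_sech_int_mul (hh : h ≠ 0) : Summable fun j : ℤ => sech (j * h) := by
  have hnat : Summable fun n : ℕ => sech (n * h) := by
    have hexp : Summable fun n : ℕ => 2 * exp (n * -|h|) :=
      (summable_exp_nat_mul_iff.2 (neg_lt_zero.2 (abs_pos.2 hh))).mul_left 2
    refine hexp.of_nonneg_of_le (fun n => (sech_pos _).le) fun n => ?_
    simpa [abs_mul] using sech_le_two_mul_exp_neg_abs (n * h)
  refine .of_nat_of_neg (by simpa using hnat) ?_
  simpa [sech_neg] using hnat

theorem exists_summable_forall_norm_comp_add_int_mul_le (hh : h ≠ 0) (hφ : φ =O[⊤] sech) (R : ℝ) :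
    ∃ u : ℤ → ℝ, Summable u ∧
      ∀ (j : ℤ) (x : ℝ), x ∈ Metric.ball (0 : ℝ) R → ‖φ (x + j * h)‖ ≤ u j := by
  obtain ⟨C, hC, hbound⟩ := hφ.exists_pos
  refine ⟨fun j => C * (exp R * sech (j * h)),
    ((summable_sech_int_mul hh).mul_left _).mul_left _, fun j x hx => ?_⟩
  have hxR : |x| ≤ R := (mem_ball_zero_iff.1 hx).le
  have hpos : 0 ≤ sech (j * h) := (sech_pos _).le
  calc ‖φ (x + j * h)‖ ≤ C * ‖sech (x + j * h)‖ := isBigOWith_top.1 hbound _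
    _ = C * sech (x + j * h) := by rw [norm_of_nonneg (sech_pos _).le]
    _ ≤ C * (exp |x| * sech (j * h)) := by gcongr; exact sech_add_le_exp_abs_mul_sech _ _
    _ ≤ C * (exp R * sech (j * h)) := by gcongr

theorem summable_norm_comp_add_int_mul (hh : h ≠ 0) (hφ : φ =O[⊤] sech) (x : ℝ) :
    Summable fun j : ℤ => ‖φ (x + j * h)‖ := by
  obtain ⟨u, hu, hbound⟩ :=
    exists_summable_forall_norm_comp_add_int_mul_le hh hφ (|x| + 1)
  exact hu.of_nonneg_of_le (fun _ => norm_nonneg _) fun j =>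
    hbound j x (mem_ball_zero_iff.2 (lt_add_one _))

theorem summable_and_hasDerivAt_tsum_of_isBigO_sech [NormedSpace ℝ E] [CompleteSpace E]
    {g : ℤ → ℝ → E} (hh : h ≠ 0) (hφ : φ =O[⊤] sech)
    (hg : ∀ j x, HasDerivAt (g j) (φ (x + j * h)) x) (hg0 : Summable fun j => g j 0) (x : ℝ) :
    (Summable fun j => g j x) ∧
      HasDerivAt (fun y => ∑' j, g j y) (∑' j : ℤ, φ (x + j * h)) x := by
  obtain ⟨u, hu, hbound⟩ :=
    exists_summable_forall_norm_comp_add_int_mul_le hh hφ (|x| + 1)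
  have hball := (convex_ball (0 : ℝ) (|x| + 1)).isPreconnected
  have hzero : (0 : ℝ) ∈ Metric.ball 0 (|x| + 1) := Metric.mem_ball_self (by positivity)
  have hx : x ∈ Metric.ball 0 (|x| + 1) := mem_ball_zero_iff.2 (lt_add_one _)
  exact ⟨summable_of_summable_hasDerivAt_of_isPreconnected hu Metric.isOpen_ball hball
      (fun j y _ => hg j y) hbound hzero hg0 hx,
    hasDerivAt_tsum_of_isPreconnected hu Metric.isOpen_ball hball
      (fun j y _ => hg j y) hbound hzero hg0 hx⟩

end Periodization

theorem sech_pow_isBigO_sech {n : ℕ} (hn : n ≠ 0) : (fun x => sech x ^ n) =O[⊤] sech := by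
  refine .of_bound 1 (.of_forall fun x => ?_)
  have hpos := sech_pos x
  rw [one_mul, norm_of_nonneg hpos.le, norm_of_nonneg (by positivity)]
  exact pow_le_of_le_one hpos.le (sech_le_one x) hn

theorem sech_pow_mul_tanh_isBigO_sech {n : ℕ} (hn : n ≠ 0) :
    (fun x => -(n * (sech x ^ n * tanh x))) =O[⊤] sech := by
  have htanh : tanh =O[⊤] fun _ => (1 : ℝ) :=
    .of_bound 1 (.of_forall fun x => by simpa using (abs_tanh_lt_one x).le)
  simpa using (((sech_pow_isBigO_sech hn).mul htanh).const_mul_left (n : ℝ)).neg_left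

/-- The periodisation `∑ⱼ sech (x + j h) ^ n` of the `n`-th power of `sech`. For `n = 1` it is, up
to scaling, Jacobi's elliptic function `dn`. -/
noncomputable def sechSum (n : ℕ) (h x : ℝ) : ℝ := ∑' j : ℤ, sech (x + j * h) ^ n

section SechSum

variable {n : ℕ} {h : ℝ}

theorem hasSum_sechSum (hn : n ≠ 0) (hh : h ≠ 0) (x : ℝ) :
    HasSum (fun j : ℤ => sech (x + j * h) ^ n) (sechSum n h x) :=
  (summable_norm_comp_add_int_mul hh (sech_pow_isBigO_sech hn) x).of_norm.hasSum

theorem hasSum_sechSum_one (hh : h ≠ 0) (x : ℝ) :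
    HasSum (fun j : ℤ => sech (x + j * h)) (sechSum 1 h x) := by
  simpa only [pow_one] using hasSum_sechSum one_ne_zero hh x

theorem sech_pow_le_sechSum (hn : n ≠ 0) (hh : h ≠ 0) (x : ℝ) : sech x ^ n ≤ sechSum n h x := by
  simpa using le_hasSum (hasSum_sechSum hn hh x) 0 fun j _ => pow_nonneg (sech_pos _).le n

theorem sechSum_pos (hn : n ≠ 0) (hh : h ≠ 0) (x : ℝ) : 0 < sechSum n h x :=
  (pow_pos (sech_pos x) n).trans_le (sech_pow_le_sechSum hn hh x)

theorem sechSum_neg (n : ℕ) (h x : ℝ) : sechSum n h (-x) = sechSum n h x := by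
  rw [sechSum, ← (Equiv.neg ℤ).tsum_eq]
  refine tsum_congr fun j => ?_
  rw [← sech_neg, Equiv.neg_apply]
  push_cast
  ring_nf

theorem sechSum_add_int_mul (n : ℕ) (h x : ℝ) (m : ℤ) :
    sechSum n h (x + m * h) = sechSum n h x := by
  rw [sechSum, sechSum, ← (Equiv.addRight m).tsum_eq fun j : ℤ => sech (x + j * h) ^ n]
  refine tsum_congr fun j => ?_
  rw [Equiv.coe_addRight]
  push_cast
  ring_nf

theorem hasDerivAt_sechSum (hn : n ≠ 0) (hh : h ≠ 0) (x : ℝ) :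
    HasDerivAt (sechSum n h)
      (∑' j : ℤ, -(n * (sech (x + j * h) ^ n * tanh (x + j * h)))) x :=
  (summable_and_hasDerivAt_tsum_of_isBigO_sech hh (sech_pow_mul_tanh_isBigO_sech hn)
    (fun j y => (hasDerivAt_sech_pow (y + j * h) n).comp_add_const y (j * h))
    (hasSum_sechSum hn hh 0).summable x).2

theorem hasDerivAt_deriv_sechSum (hn : n ≠ 0) (hh : h ≠ 0) (x : ℝ) :
    HasDerivAt (deriv (sechSum n h))
      (n ^ 2 * sechSum n h x - n * (n + 1) * sechSum (n + 2) h x) x := by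
  have hO : (fun y => n ^ 2 * sech y ^ n - n * (n + 1) * sech y ^ (n + 2)) =O[⊤] sech :=
    ((sech_pow_isBigO_sech hn).const_mul_left _).sub
      ((sech_pow_isBigO_sech (by lia)).const_mul_left _)
  have hsum := ((hasSum_sechSum hn hh x).mul_left ((n : ℝ) ^ 2)).sub
    ((hasSum_sechSum (n := n + 2) (by lia) hh x).mul_left (n * (n + 1) : ℝ))
  rw [funext fun y => (hasDerivAt_sechSum hn hh y).deriv, ← hsum.tsum_eq]
  exact (summable_and_hasDerivAt_tsum_of_isBigO_sech hh hO
    (fun j y => (hasDerivAt_sech_pow_mul_tanh (y + j * h) n).comp_add_const y (j * h))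
    (summable_norm_comp_add_int_mul hh (sech_pow_mul_tanh_isBigO_sech hn) 0).of_norm x).2

theorem deriv_sechSum_zero (n : ℕ) (h : ℝ) : deriv (sechSum n h) 0 = 0 := by
  have hneg := deriv_comp_neg (sechSum n h) 0
  rw [funext (sechSum_neg n h), neg_zero] at hneg
  linarith

end SechSum

section Products

variable {h : ℝ}

theorem tendsto_add_int_mul_atTop (hh : 0 < h) (x : ℝ) :
    Tendsto (fun j : ℤ => x + j * h) atTop atTop :=
  tendsto_atTop_add_const_left _ _ (tendsto_intCast_atTop_atTop.atTop_mul_const hh)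

theorem tendsto_add_int_mul_atBot (hh : 0 < h) (x : ℝ) :
    Tendsto (fun j : ℤ => x + j * h) atBot atBot :=
  tendsto_atBot_add_const_left _ _ ((tendsto_intCast_atBot_iff.2 tendsto_id).atBot_mul_const hh)

theorem summable_sech_pow_mul_sech_add {n : ℕ} (hn : n ≠ 0) (hh : h ≠ 0) (x : ℝ) (m : ℤ) :
    Summable fun j : ℤ => sech (x + j * h) ^ n * sech (x + (j + m : ℤ) * h) :=
  (hasSum_sechSum hn hh x).summable.of_nonneg_of_le
    (fun _ => mul_nonneg (pow_nonneg (sech_pos _).le n) (sech_pos _).le)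
    fun _ => mul_le_of_le_one_right (pow_nonneg (sech_pos _).le n) (sech_le_one _)

theorem hasSum_sech_mul_sech_add (hh : 0 < h) (x : ℝ) {m : ℤ} (hm : m ≠ 0) :
    HasSum (fun j : ℤ => sech (x + j * h) * sech (x + (j + m : ℤ) * h)) (2 * m / sinh (m * h)) := by
  let t (j : ℤ) : ℝ := tanh (x + j * h)
  have hdiff (k j : ℤ) : t (j + k) - t j =
      sinh (k * h) * (sech (x + j * h) ^ 1 * sech (x + (j + k : ℤ) * h)) := by
    have hadd : x + (j + k : ℤ) * h = x + j * h + k * h := by push_cast; ring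
    rw [pow_one, hadd, sinh_mul_sech_mul_sech_add, ← hadd]
  have hsummable : Summable fun j => t (j + 1) - t j := by
    simp only [hdiff]
    exact (summable_sech_pow_mul_sech_add one_ne_zero hh.ne' x 1).mul_left _
  have htop : Tendsto t atTop (𝓝 1) := tendsto_tanh_atTop.comp (tendsto_add_int_mul_atTop hh x)
  have hbot : Tendsto t atBot (𝓝 (-1)) := tendsto_tanh_atBot.comp (tendsto_add_int_mul_atBot hh x)
  have htelescope := hasSum_int_telescope_add (hasSum_int_telescope hsummable htop hbot) m
  have hsinh : sinh (m * h) ≠ 0 := by simp [hm, hh.ne']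
  have hvalue : (sinh (m * h))⁻¹ * m • (1 - -1 : ℝ) = 2 * m / sinh (m * h) := by
    rw [zsmul_eq_mul]
    ring
  rw [← hvalue]
  refine (htelescope.mul_left (sinh (m * h))⁻¹).congr_fun fun j => ?_
  rw [hdiff, pow_one, inv_mul_cancel_left₀ hsinh]

/-- The term `m = 0` of the series is `0 / 0 = 0`: the corresponding diagonal of the product
contributes `sechSum 2 h x` instead. -/
theorem sechSum_one_sq (hh : 0 < h) (x : ℝ) :
    sechSum 1 h x ^ 2 = sechSum 2 h x + ∑' m : ℤ, 2 * m / sinh (m * h) := by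
  have hsum := hasSum_sechSum_one hh.ne' x
  have hdiag (m : ℤ) : ∑' j : ℤ, sech (x + j * h) * sech (x + (j + m : ℤ) * h) =
      (if m = 0 then sechSum 2 h x else 0) + 2 * m / sinh (m * h) := by
    rcases eq_or_ne m 0 with rfl | hm
    · simp [sechSum, sq]
    · rw [(hasSum_sech_mul_sech_add hh x hm).tsum_eq, if_neg hm, zero_add]
  have hprod := hasSum_tsum_mul_add hsum.summable.norm hsum.summable.norm
  simp only [hdiag, hsum.tsum_eq] at hprod
  have hoff := (hprod.sub (hasSum_ite_eq 0 (sechSum 2 h x))).tsum_eq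
  simp only [add_sub_cancel_left] at hoff
  linear_combination -hoff

theorem hasSum_sech_sq_mul_sech_add_add_sech_sub (hh : h ≠ 0) (x : ℝ) {m : ℤ} (hm : m ≠ 0) :
    HasSum (fun j : ℤ => sech (x + j * h) ^ 2 *
        (sech (x + (j + m : ℤ) * h) + sech (x + (j - m : ℤ) * h)))
      (sech (m * (h / 2)) ^ 2 * sechSum 1 h x) := by
  have hd : (m : ℝ) * (h / 2) ≠ 0 := by simp [hm, hh]
  have hdouble : (m : ℝ) * h = 2 * (m * (h / 2)) := by ring
  have : sinh (m * (h / 2)) ≠ 0 := by simpa using hd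
  have hsum := hasSum_sechSum_one hh x
  have hshift (k : ℤ) : HasSum (fun j : ℤ => sech (x + (j + k : ℤ) * h)) (sechSum 1 h x) :=
    (Equiv.addRight k).hasSum_iff.2 hsum
  have hvalue : (sinh (m * h) ^ 2)⁻¹ *
      (2 * cosh (m * h) * sechSum 1 h x - (sechSum 1 h x + sechSum 1 h x)) =
      sech (m * (h / 2)) ^ 2 * sechSum 1 h x := by
    have := (cosh_pos (m * (h / 2))).ne'
    rw [hdouble, sinh_two_mul, cosh_two_mul, cosh_sq, sech]
    field_simp
    ring
  rw [← hvalue]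
  refine (((hsum.mul_left (2 * cosh (m * h))).sub
    ((hshift m).add (hshift (-m)))).mul_left (sinh (m * h) ^ 2)⁻¹).congr_fun fun j => ?_
  rw [← sub_eq_add_neg, show x + (j + m : ℤ) * h = x + j * h + m * h by push_cast; ring,
    show x + (j - m : ℤ) * h = x + j * h - m * h by push_cast; ring,
    ← sinh_sq_mul_sech_sq_mul_sech_add_add_sech_sub, inv_mul_cancel_left₀]
  simpa [hdouble] using hd

theorem sechSum_two_mul_sechSum_one (hh : h ≠ 0) (x : ℝ) :
    2 * (sechSum 2 h x * sechSum 1 h x) =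
      2 * sechSum 3 h x + (sechSum 2 (h / 2) 0 - 1) * sechSum 1 h x := by
  have hsq := hasSum_sechSum two_ne_zero hh x
  have hsum := hasSum_sechSum_one hh x
  have hprod := hasSum_tsum_mul_add hsq.summable.norm hsum.summable.norm
  rw [hsq.tsum_eq, hsum.tsum_eq] at hprod
  have hdiag (m : ℤ) :
      (∑' j : ℤ, sech (x + j * h) ^ 2 * sech (x + (j + m : ℤ) * h)) +
        ∑' j : ℤ, sech (x + j * h) ^ 2 * sech (x + (j + -m : ℤ) * h) =
      (if m = 0 then 2 * sechSum 3 h x - sechSum 1 h x else 0) +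
        sech (0 + m * (h / 2)) ^ 2 * sechSum 1 h x := by
    rcases eq_or_ne m 0 with rfl | hm
    · simp only [neg_zero, add_zero, ← pow_succ, if_true, Int.cast_zero, zero_mul, sech_zero]
      rw [sechSum]
      ring
    · rw [if_neg hm, zero_add, zero_add,
        ← (hasSum_sech_sq_mul_sech_add_add_sech_sub hh x hm).tsum_eq,
        ← (summable_sech_pow_mul_sech_add two_ne_zero hh x m).tsum_add
          (summable_sech_pow_mul_sech_add two_ne_zero hh x (-m))]
      simp only [mul_add, sub_eq_add_neg]
  have hright := (hasSum_ite_eq (0 : ℤ) (2 * sechSum 3 h x - sechSum 1 h x)).add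
    ((hasSum_sechSum two_ne_zero (div_ne_zero hh two_ne_zero) 0).mul_right (sechSum 1 h x))
  have hpair := (hprod.add ((Equiv.neg ℤ).hasSum_iff.2 hprod)).unique (hright.congr_fun hdiag)
  linear_combination hpair

end Products

/-- The primitive of `sechSum 1 h` vanishing at `0`, an analogue of Jacobi's amplitude function.
Subtracting `gudermannian (j * h)` makes the periodisation of `gudermannian` converge. -/
noncomputable def amplitude (h x : ℝ) : ℝ :=
  ∑' j : ℤ, (gudermannian (x + j * h) - gudermannian (j * h))

section Amplitude

variable {h : ℝ}

theorem summable_and_hasDerivAt_amplitude (hh : h ≠ 0) (x : ℝ) :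
    (Summable fun j : ℤ => gudermannian (x + j * h) - gudermannian (j * h)) ∧
      HasDerivAt (amplitude h) (sechSum 1 h x) x := by
  have hO : sech =O[⊤] sech := isBigO_refl _ _
  rw [← (hasSum_sechSum_one hh x).tsum_eq]
  exact summable_and_hasDerivAt_tsum_of_isBigO_sech hh hO
    (fun j y => ((hasDerivAt_gudermannian (y + j * h)).comp_add_const y (j * h)).sub_const _)
    (by simp) x

theorem hasDerivAt_amplitude (hh : h ≠ 0) (x : ℝ) :
    HasDerivAt (amplitude h) (sechSum 1 h x) x :=
  (summable_and_hasDerivAt_amplitude hh x).2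

theorem amplitude_zero (h : ℝ) : amplitude h 0 = 0 := by simp [amplitude]

theorem amplitude_neg (h x : ℝ) : amplitude h (-x) = -amplitude h x := by
  rw [amplitude, amplitude, ← tsum_neg, ← (Equiv.neg ℤ).tsum_eq]
  refine tsum_congr fun j => ?_
  rw [Equiv.neg_apply, show -x + (-j : ℤ) * h = -(x + j * h) by push_cast; ring,
    show (-j : ℤ) * h = -(j * h) by push_cast; ring, gudermannian_neg, gudermannian_neg]
  ring

theorem strictMono_amplitude (hh : h ≠ 0) : StrictMono (amplitude h) :=
  strictMono_of_deriv_pos fun x => by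
    rw [(hasDerivAt_amplitude hh x).deriv]
    exact sechSum_pos one_ne_zero hh x

theorem amplitude_add (hh : 0 < h) (x : ℝ) : amplitude h (x + h) = amplitude h x + π := by
  let g (j : ℤ) : ℝ := gudermannian (x + j * h)
  have hsum (y : ℝ) := (summable_and_hasDerivAt_amplitude hh.ne' y).1
  have hdiff (j : ℤ) : gudermannian (x + h + j * h) - gudermannian (j * h) -
      (gudermannian (x + j * h) - gudermannian (j * h)) = g (j + 1) - g j := by
    have hshift : x + h + j * h = x + (j + 1 : ℤ) * h := by push_cast; ring
    rw [hshift, sub_sub_sub_cancel_right]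
  have htelescope := hasSum_int_telescope (((hsum (x + h)).sub (hsum x)).congr hdiff)
    (tendsto_gudermannian_atTop.comp (tendsto_add_int_mul_atTop hh x))
    (tendsto_gudermannian_atBot.comp (tendsto_add_int_mul_atBot hh x))
  have hvalue := ((hsum (x + h)).tsum_sub (hsum x)).symm.trans
    ((tsum_congr hdiff).trans htelescope.tsum_eq)
  rw [amplitude, amplitude]
  linear_combination hvalue

theorem amplitude_add_int_mul (hh : 0 < h) (x : ℝ) (n : ℤ) :
    amplitude h (x + n * h) = amplitude h x + n * π := by
  have hperiodic : Function.Periodic (fun y => amplitude h y - y / h * π) h := fun y => by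
    simp only [amplitude_add hh, add_div, div_self hh.ne']
    ring
  have := hperiodic.int_mul n x
  simp only [add_div, mul_div_cancel_right₀ _ hh.ne'] at this
  linear_combination this

theorem amplitude_int_mul_half (hh : 0 < h) (n : ℤ) : amplitude h (n * (h / 2)) = n * (π / 2) := by
  have hshift := amplitude_add_int_mul hh (-(n * (h / 2))) n
  rw [amplitude_neg, show -(n * (h / 2)) + n * h = n * (h / 2) by ring] at hshift
  linarith

theorem sin_two_mul_amplitude_eq_zero_iff (hh : 0 < h) (x : ℝ) :
    sin (2 * amplitude h x) = 0 ↔ ∃ n : ℤ, x = n * (h / 2) := by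
  rw [sin_eq_zero_iff]
  refine exists_congr fun n => ?_
  rw [← (strictMono_amplitude hh.ne').injective.eq_iff (a := x), amplitude_int_mul_half hh]
  constructor <;> intro hn <;> linarith

end Amplitude

/-- The constant `A` in the pendulum equation `Φ'' = -A * sin (2 * Φ)` satisfied by
`Φ = amplitude h`. -/
noncomputable def pendulumCoeff (h : ℝ) : ℝ := sechSum 2 h 0 - sechSum 2 (h / 2) 0 / 2

section Pendulum

variable {h : ℝ}

theorem hasDerivAt_deriv_sechSum_one (hh : h ≠ 0) (x : ℝ) :
    HasDerivAt (deriv (sechSum 1 h)) (sechSum 1 h x * (sechSum 2 (h / 2) 0 - 2 * sechSum 2 h x))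
      x := by
  refine (hasDerivAt_deriv_sechSum one_ne_zero hh x).congr_deriv ?_
  push_cast
  linear_combination sechSum_two_mul_sechSum_one hh x

theorem hasDerivAt_sechSum_two (hh : 0 < h) (x : ℝ) :
    HasDerivAt (sechSum 2 h) (2 * sechSum 1 h x * deriv (sechSum 1 h) x) x := by
  have hsq : sechSum 2 h = fun y => sechSum 1 h y ^ 2 - ∑' m : ℤ, 2 * m / sinh (m * h) :=
    funext fun y => eq_sub_of_add_eq (sechSum_one_sq hh y).symm
  have hone := (hasDerivAt_sechSum one_ne_zero hh.ne' x).differentiableAt.hasDerivAt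
  rw [hsq]
  exact ((hone.pow 2).sub_const _).congr_deriv (by ring)

theorem sechSum_two_eq_and_deriv_sechSum_one_eq (hh : 0 < h) (x : ℝ) :
    sechSum 2 h x = sechSum 2 (h / 2) 0 / 2 + pendulumCoeff h * cos (2 * amplitude h x) ∧
      deriv (sechSum 1 h) x = -(pendulumCoeff h * sin (2 * amplitude h x)) := by
  obtain ⟨hX, hY⟩ := eq_rotation_of_hasDerivAt
    (X := fun y => 2 * sechSum 2 h y - sechSum 2 (h / 2) 0)
    (Y := fun y => 2 * deriv (sechSum 1 h) y)
    (θ := fun y => 2 * amplitude h y) (ω := fun y => 2 * sechSum 1 h y)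
    (fun y => (((hasDerivAt_sechSum_two hh y).const_mul 2).sub_const _).congr_deriv (by ring))
    (fun y => ((hasDerivAt_deriv_sechSum_one hh.ne' y).const_mul 2).congr_deriv (by ring))
    (fun y => (hasDerivAt_amplitude hh.ne' y).const_mul 2) (by simp [amplitude_zero]) x
  simp only [deriv_sechSum_zero] at hX hY
  rw [pendulumCoeff]
  constructor
  · linear_combination hX / 2
  · linear_combination hY / 2

end Pendulum

section Nonconstancy

variable {n : ℕ} {h : ℝ}

theorem sechSum_add_two_of_forall_eq {c : ℝ} (hn : n ≠ 0) (hh : h ≠ 0)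
    (hc : ∀ x, sechSum n h x = c) (x : ℝ) : sechSum (n + 2) h x = n * c / (n + 1) := by
  have hderiv : deriv (sechSum n h) = fun _ => 0 := by simp [funext hc]
  have hzero := hasDerivAt_deriv_sechSum hn hh x
  rw [hderiv] at hzero
  have heq := hzero.unique (hasDerivAt_const x 0)
  have hn0 : (n : ℝ) ≠ 0 := Nat.cast_ne_zero.2 hn
  rw [eq_div_iff (by positivity)]
  apply mul_left_cancel₀ hn0
  rw [hc] at heq
  linear_combination -heq

theorem exists_forall_sechSum_odd_eq {c : ℝ} (hh : h ≠ 0) (hc : ∀ x, sechSum 1 h x = c) (k : ℕ) :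
    ∃ d, ∀ x, sechSum (2 * k + 1) h x = d := by
  induction k with
  | zero => exact ⟨c, hc⟩
  | succ k ih =>
    obtain ⟨d, hd⟩ := ih
    exact ⟨_, sechSum_add_two_of_forall_eq (by lia) hh hd⟩

theorem sech_half_add_int_mul_le (h : ℝ) (j : ℤ) : sech (h / 2 + j * h) ≤ sech (h / 2) := by
  rw [sech_le_sech_iff, show h / 2 + j * h = (2 * j + 1 : ℤ) * (h / 2) by push_cast; ring, abs_mul]
  refine le_mul_of_one_le_left (abs_nonneg _) ?_
  rw [← Int.cast_abs]
  exact_mod_cast Int.one_le_abs (by lia)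

theorem sechSum_half_le (n : ℕ) (hh : h ≠ 0) :
    sechSum (n + 1) h (h / 2) ≤ sech (h / 2) ^ n * sechSum 1 h (h / 2) := by
  refine hasSum_le (fun j => ?_) (hasSum_sechSum n.succ_ne_zero hh _)
    ((hasSum_sechSum_one hh _).mul_left _)
  rw [pow_succ]
  gcongr
  · exact (sech_pos _).le
  · exact (sech_pos _).le
  · exact sech_half_add_int_mul_le h j

theorem not_forall_sechSum_one_eq (hh : h ≠ 0) (c : ℝ) : ¬ ∀ x, sechSum 1 h x = c := by
  intro hc
  have hS := sechSum_pos one_ne_zero hh (h / 2)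
  have hlt : sech (h / 2) ^ 2 < 1 :=
    pow_lt_one₀ (sech_pos _).le (sech_lt_one (div_ne_zero hh two_ne_zero)) two_ne_zero
  obtain ⟨k, hk⟩ := exists_pow_lt_of_lt_one (inv_pos.2 hS) hlt
  obtain ⟨d, hd⟩ := exists_forall_sechSum_odd_eq hh hc k
  refine lt_irrefl (1 : ℝ) ?_
  calc 1 = sech 0 ^ (2 * k + 1) := by rw [sech_zero, one_pow]
    _ ≤ sechSum (2 * k + 1) h 0 := sech_pow_le_sechSum (by lia) hh 0
    _ = sechSum (2 * k + 1) h (h / 2) := by rw [hd, hd]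
    _ ≤ sech (h / 2) ^ (2 * k) * sechSum 1 h (h / 2) := sechSum_half_le (2 * k) hh
    _ < 1 := by rwa [pow_mul, ← lt_div_iff₀ hS, one_div]

theorem pendulumCoeff_ne_zero (hh : 0 < h) : pendulumCoeff h ≠ 0 := by
  intro hA
  refine not_forall_sechSum_one_eq hh.ne' (sechSum 1 h 0) fun x => ?_
  refine is_const_of_deriv_eq_zero
    (fun y => (hasDerivAt_sechSum one_ne_zero hh.ne' y).differentiableAt) (fun y => ?_) x 0
  rw [(sechSum_two_eq_and_deriv_sechSum_one_eq hh y).2, hA, zero_mul, neg_zero]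

end Nonconstancy

section CriticalPoints

variable {h : ℝ}

theorem contDiff_amplitude (hh : 0 < h) {n : ℕ∞} : ContDiff ℝ n (amplitude h) := by
  let F (z : ℝ × ℝ) : ℝ × ℝ := (z.2, -(pendulumCoeff h * sin (2 * z.1)))
  have hF : ContDiff ℝ n F := by unfold F; fun_prop
  have hy (x : ℝ) : HasDerivAt (fun x => (amplitude h x, sechSum 1 h x))
      (F (amplitude h x, sechSum 1 h x)) x := by
    refine (hasDerivAt_amplitude hh.ne' x).prodMk ?_
    rw [← (sechSum_two_eq_and_deriv_sechSum_one_eq hh x).2]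
    exact (hasDerivAt_sechSum one_ne_zero hh.ne' x).differentiableAt.hasDerivAt
  exact (contDiff_of_hasDerivAt_comp hF hy).fst

theorem contDiff_sechSum_two (hh : 0 < h) {n : ℕ∞} : ContDiff ℝ n (sechSum 2 h) := by
  rw [funext fun x => (sechSum_two_eq_and_deriv_sechSum_one_eq hh x).1]
  exact contDiff_const.add (contDiff_const.mul (contDiff_const.mul (contDiff_amplitude hh)).cos)

theorem deriv_sechSum_two (hh : 0 < h) :
    deriv (sechSum 2 h) =
      fun x => -(2 * pendulumCoeff h) * (sechSum 1 h x * sin (2 * amplitude h x)) := by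
  funext x
  rw [(hasDerivAt_sechSum_two hh x).deriv, (sechSum_two_eq_and_deriv_sechSum_one_eq hh x).2]
  ring

theorem deriv_sechSum_two_eq_zero_iff (hh : 0 < h) (x : ℝ) :
    deriv (sechSum 2 h) x = 0 ↔ ∃ n : ℤ, x = n * (h / 2) := by
  rw [deriv_sechSum_two hh, ← sin_two_mul_amplitude_eq_zero_iff hh]
  simp [pendulumCoeff_ne_zero hh, (sechSum_pos one_ne_zero hh.ne' x).ne']

theorem deriv_deriv_sechSum_two_ne_zero (hh : 0 < h) {x : ℝ} (hx : deriv (sechSum 2 h) x = 0) :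
    deriv (deriv (sechSum 2 h)) x ≠ 0 := by
  have hsin : sin (2 * amplitude h x) = 0 :=
    (sin_two_mul_amplitude_eq_zero_iff hh x).2 ((deriv_sechSum_two_eq_zero_iff hh x).1 hx)
  have hcos : cos (2 * amplitude h x) ≠ 0 := fun hcos => by
    simpa [hsin, hcos] using sin_sq_add_cos_sq (2 * amplitude h x)
  have hone := (hasDerivAt_sechSum one_ne_zero hh.ne' x).differentiableAt.hasDerivAt
  have hdd := (hone.mul ((hasDerivAt_amplitude hh.ne' x).const_mul 2).sin).const_mul
    (-(2 * pendulumCoeff h))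
  rw [deriv_sechSum_two hh]
  refine hdd.deriv.trans_ne ?_
  rw [hsin]
  simp [pendulumCoeff_ne_zero hh, (sechSum_pos one_ne_zero hh.ne' x).ne', hcos]

end CriticalPoints

/-- The function `μ̂₁` whose `h`-periodisation is, up to the factor `2b`, the homoclinic Melnikov
potential `L̂₁`. -/
noncomputable def melnikovSummand (a b s : ℝ) : ℝ :=
  a / b ^ 3 - a * b / (a ^ 2 * (1 / cosh s) ^ 2 + b ^ 2 * tanh s ^ 2) ^ 2

section Melnikov

variable {a b h : ℝ}

theorem melnikovSummand_eq {δ : ℝ} (hb : b ≠ 0) (hδ : b ^ 2 * sinh δ ^ 2 = a ^ 2 - b ^ 2) (s : ℝ) :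
    melnikovSummand a b s = a / b ^ 3 * (2 * sinh δ ^ 2 * (sech (s - δ) * sech (s + δ)) -
      sinh δ ^ 4 * (sech (s - δ) * sech (s + δ)) ^ 2) := by
  set p := sech (s - δ) * sech (s + δ) with hp
  have hcosh := (cosh_pos s).ne'
  have hp0 : p ≠ 0 := mul_ne_zero (sech_pos _).ne' (sech_pos _).ne'
  have hprod : p * (cosh s ^ 2 + sinh δ ^ 2) = 1 := by
    have hadd := (cosh_pos (s + δ)).ne'
    have hsub := (cosh_pos (s - δ)).ne'
    rw [hp, sech, sech]
    field_simp
    rw [cosh_add, cosh_sub]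
    linear_combination -cosh s ^ 2 * cosh_sq δ - sinh δ ^ 2 * cosh_sq s
  have hden : a ^ 2 * (1 / cosh s) ^ 2 + b ^ 2 * tanh s ^ 2 = b ^ 2 / (cosh s ^ 2 * p) := by
    rw [tanh_eq_sinh_div_cosh]
    field_simp
    linear_combination b ^ 2 * hprod - p * hδ - p * b ^ 2 * cosh_sq s
  have hcoshp : cosh s ^ 2 * p = 1 - sinh δ ^ 2 * p := by linear_combination hprod
  rw [melnikovSummand, hden, hcoshp, div_pow, div_div_eq_mul_div]
  field_simp
  ring

theorem exists_tsum_melnikovSummand_eq (ha : 0 < a) (hb : 0 < b) (hh : 0 < h)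
    (hσ : b ^ 2 * sinh (h / 2) ^ 2 = a ^ 2 - b ^ 2) :
    ∃ c K : ℝ, 0 < K ∧
      ∀ s, ∑' j : ℤ, melnikovSummand a b (s + j * h) = c + K * sechSum 2 h (s + h / 2) := by
  have : 0 < sinh h := sinh_pos_iff.2 hh
  have : 0 < sinh (h / 2) := sinh_pos_iff.2 (half_pos hh)
  set β := a / b ^ 3 * (sinh (h / 2) ^ 4 / sinh h ^ 2)
  set α := 2 * (a / b ^ 3 * sinh (h / 2) ^ 2 - β * cosh h)
  have hβ : β * sinh h ^ 2 = a / b ^ 3 * sinh (h / 2) ^ 4 := by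
    rw [mul_assoc, div_mul_cancel₀ _ (by positivity)]
  refine ⟨2 * α / sinh h, 2 * β, by positivity, fun s => ?_⟩
  have hterm (j : ℤ) : melnikovSummand a b (s + j * h) =
      α * (sech (s - h / 2 + j * h) * sech (s - h / 2 + (j + 1 : ℤ) * h)) +
        β * (sech (s - h / 2 + j * h) ^ 2 + sech (s + h / 2 + j * h) ^ 2) := by
    have hsq := sinh_sq_mul_sech_mul_sech_add_sq (s - h / 2 + j * h) h
    rw [melnikovSummand_eq hb.ne' hσ, show s + j * h - h / 2 = s - h / 2 + j * h by ring,
      show s + j * h + h / 2 = s - h / 2 + j * h + h by ring,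
      show s - h / 2 + (j + 1 : ℤ) * h = s - h / 2 + j * h + h by push_cast; ring,
      show s + h / 2 + j * h = s - h / 2 + j * h + h by ring]
    simp only [α]
    linear_combination hβ * (sech (s - h / 2 + j * h) * sech (s - h / 2 + j * h + h)) ^ 2 - β * hsq
  have hperiod : sechSum 2 h (s + h / 2) = sechSum 2 h (s - h / 2) := by
    simpa [show s - h / 2 + h = s + h / 2 by ring] using sechSum_add_int_mul 2 h (s - h / 2) 1
  have hsum := ((hasSum_sech_mul_sech_add hh (s - h / 2) one_ne_zero).mul_left α).add
    (((hasSum_sechSum two_ne_zero hh.ne' (s - h / 2)).add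
      (hasSum_sechSum two_ne_zero hh.ne' (s + h / 2))).mul_left β)
  rw [tsum_congr hterm, hsum.tsum_eq, ← hperiod, Int.cast_one, one_mul]
  ring

end Melnikov

theorem exists_int_add_half_eq_iff {h : ℝ} (hh : h ≠ 0) (s : ℝ) :
    (∃ n : ℤ, s + h / 2 = n * (h / 2)) ↔ ∃ j : ℤ, 2 * s / h = j := by
  rw [← (Equiv.addRight (1 : ℤ)).exists_congr_right]
  refine exists_congr fun j => ?_
  rw [div_eq_iff hh, Equiv.coe_addRight]
  push_cast
  constructor <;> intro hj <;> linarith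

/-- The homoclinic Melnikov potential `L̂₁(s) = 2b Σ_{j∈ℤ} μ̂₁(s + jh)` is smooth,
its real critical points are exactly the points of `(h/2)·ℤ`, and all of them are
nondegenerate. -/
theorem homoclinic_potential_critical_points (a b h : ℝ) (hb : 0 < b) (hab : b < a)
    (hh : 0 < h)
    (hsinh : Real.sinh (h / 2) = Real.sqrt (a ^ 2 - b ^ 2) / b)
    (μ L : ℝ → ℝ)
    (hμ : μ = fun s => a / b ^ 3 -
      a * b / (a ^ 2 * (1 / Real.cosh s) ^ 2 + b ^ 2 * Real.tanh s ^ 2) ^ 2)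
    (hL : L = fun s => 2 * b * ∑' j : ℤ, μ (s + j * h)) :
    ContDiff ℝ (⊤ : ℕ∞) L ∧
    (∀ s : ℝ, deriv L s = 0 ↔ ∃ j : ℤ, 2 * s / h = (j : ℝ)) ∧
    (∀ s : ℝ, (∃ j : ℤ, 2 * s / h = (j : ℝ)) → deriv (deriv L) s ≠ 0) := by
  have hσ : b ^ 2 * sinh (h / 2) ^ 2 = a ^ 2 - b ^ 2 := by
    rw [hsinh, div_pow, sq_sqrt (by nlinarith), mul_div_cancel₀ _ (by positivity)]
  obtain ⟨c, K, hK, hsum⟩ := exists_tsum_melnikovSummand_eq (hb.trans hab) hb hh hσ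
  have hμ' : μ = melnikovSummand a b := hμ
  have hL' : L = fun s => 2 * b * (c + K * sechSum 2 h (s + h / 2)) := by
    rw [hL, hμ', funext fun s => congrArg (2 * b * ·) (hsum s)]
  have hderiv : deriv L = fun s => 2 * b * (K * deriv (sechSum 2 h) (s + h / 2)) := by
    simp [hL', deriv_comp_add_const]
  have hderiv₂ (s : ℝ) :
      deriv (deriv L) s = 2 * b * (K * deriv (deriv (sechSum 2 h)) (s + h / 2)) := by
    simp [hderiv, deriv_comp_add_const]
  have hcrit (s : ℝ) : deriv (sechSum 2 h) (s + h / 2) = 0 ↔ ∃ j : ℤ, 2 * s / h = j :=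
    (deriv_sechSum_two_eq_zero_iff hh _).trans (exists_int_add_half_eq_iff hh.ne' s)
  refine ⟨?_, fun s => ?_, fun s hs => ?_⟩
  · rw [hL']
    have := contDiff_sechSum_two hh (n := ⊤)
    fun_prop
  · rw [← hcrit, hderiv]
    simp [hb.ne', hK.ne']
  · simp [hderiv₂, hb.ne', hK.ne', deriv_deriv_sechSum_two_ne_zero hh ((hcrit s).2 hs)]
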